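/- Let (A, t) be a C_k-algebra, a ∈ A and H ⊆ A. Write D(X) for the smallest cyclic deductive system containing X. Then: (i) D({a}) = {x ∈ A : ⋀_{j=1}^{k} t^j(△a) ≤ x}; (ii) D(H ∪ {a}) = {x ∈ A : a ⇁ x ∈ D(H)}; (iii) D({a}) = {x ∈ A : a ⇁ x = 1}. -/

import Mathlib

universe u

/-- Modal pseudocomplemented De Morgan algebra (mpM-algebra). -/
class MpM (A : Type u) extends DistribLattice A, BoundedOrder A where
  dm : A → A   -- De Morgan negation ∼
  ps : A → A   -- pseudocomplement *
  dm_dm : ∀ x : A, dm (dm x) = x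
  dm_sup : ∀ x y : A, dm (x ⊔ y) = dm x ⊓ dm y
  pseudo : ∀ a x : A, a ⊓ x = ⊥ ↔ x ≤ ps a
  modal : ∀ x : A, x ⊔ dm x ≤ x ⊔ ps x

open MpM

variable {A : Type u} [MpM A]

/-- ∇x = ∼(∼x ∧ x*) -/
def nabla (x : A) : A := dm (dm x ⊓ ps x)

/-- △x = ∼∇∼x -/
def tri (x : A) : A := dm (nabla (dm x))

/-- A C_k-algebra structure on an mpM-algebra `A`: an automorphism `t` with `t^k = id`. -/
structure CkStr (A : Type u) [MpM A] (k : ℕ) where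
  t : A → A
  bij : Function.Bijective t
  map_inf : ∀ x y : A, t (x ⊓ y) = t x ⊓ t y
  map_sup : ∀ x y : A, t (x ⊔ y) = t x ⊔ t y
  map_dm : ∀ x : A, t (dm x) = dm (t x)
  map_ps : ∀ x : A, t (ps x) = ps (t x)
  map_bot : t (⊥ : A) = ⊥
  map_top : t (⊤ : A) = ⊤
  periodic : ∀ x : A, t^[k] x = x

/-- Lattice filter: nonempty, upward closed, closed under binary meets. -/
def IsLatFilter (F : Set A) : Prop :=
  F.Nonempty ∧ (∀ x ∈ F, ∀ y : A, x ≤ y → y ∈ F) ∧ ∀ x ∈ F, ∀ y ∈ F, x ⊓ y ∈ F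

/-- c-filter: a filter closed under △ and t. -/
def IsCFilter {k : ℕ} (T : CkStr A k) (F : Set A) : Prop :=
  IsLatFilter F ∧ ∀ x ∈ F, tri x ∈ F ∧ T.t x ∈ F

/-- maximal c-filter: proper and not properly contained in a proper c-filter. -/
def IsMaxCFilter {k : ℕ} (T : CkStr A k) (N : Set A) : Prop :=
  IsCFilter T N ∧ N ≠ Set.univ ∧
    ∀ G : Set A, IsCFilter T G → G ≠ Set.univ → N ⊆ G → N = G

/-- prime filter -/
def IsPrimeFilter (P : Set A) : Prop :=
  IsLatFilter P ∧ P ≠ Set.univ ∧ ∀ x y : A, x ⊔ y ∈ P → x ∈ P ∨ y ∈ P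

/-- ultrafilter: maximal proper (lattice) filter -/
def IsUltraFilter (U : Set A) : Prop :=
  IsLatFilter U ∧ U ≠ Set.univ ∧
    ∀ G : Set A, IsLatFilter G → G ≠ Set.univ → U ⊆ G → U = G

/-- Birula–Rasiowa transformation φ(P) = A \ {∼x : x ∈ P}. -/
def brPhi (P : Set A) : Set A := Set.univ \ (dm '' P)

/-- a ⇁ b = (⋁_{i=1}^{k} ∇(∼ t^i(a))) ∨ b -/
def rimp {k : ℕ} (T : CkStr A k) (a b : A) : A :=
  ((Finset.Icc 1 k).sup fun i => nabla (dm (T.t^[i] a))) ⊔ b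

/-- cyclic deductive system -/
def IsCDS {k : ℕ} (T : CkStr A k) (D : Set A) : Prop :=
  (⊤ : A) ∈ D ∧ ∀ x ∈ D, ∀ y : A, rimp T x y ∈ D → y ∈ D

/-- maximal cyclic deductive system -/
def IsMaxCDS {k : ℕ} (T : CkStr A k) (M : Set A) : Prop :=
  IsCDS T M ∧ M ≠ Set.univ ∧
    ∀ G : Set A, IsCDS T G → G ≠ Set.univ → M ⊆ G → M = G

/-- the smallest cyclic deductive system containing `X` -/
def genCDS {k : ℕ} (T : CkStr A k) (X : Set A) : Set A :=
  ⋂₀ {D : Set A | IsCDS T D ∧ X ⊆ D}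

/-- K(A) = {x : t(x) = x and ∇x = x} -/
def Kset {k : ℕ} (T : CkStr A k) : Set A := {x : A | T.t x = x ∧ nabla x = x}

/-- consistency operator ∘x = ⋀_{i=0}^{k} t^i((∼x ∨ x) ∧ (x ∧ ∼x)*) -/
def cCirc {k : ℕ} (T : CkStr A k) (x : A) : A :=
  (Finset.Icc 0 k).inf fun i => T.t^[i] ((dm x ⊔ x) ⊓ ps (x ⊓ dm x))

/-- x → y = ∼((∼(x∨y))* ∧ (x∨y)) ∨ ((∼(x∧y))* ∧ (x∧y)) -/
def mpTo (x y : A) : A :=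
  dm (ps (dm (x ⊔ y)) ⊓ (x ⊔ y)) ⊔ (ps (dm (x ⊓ y)) ⊓ (x ⊓ y))

/-- x ⇒ y = (x → y) ∧ (∼y → ∼x) -/
def mpIff (x y : A) : A := mpTo x y ⊓ mpTo (dm y) (dm x)

/-!
Put `e = ⋀_{j=1}^{k} t^j(△a)`. The modal axiom makes `△a`, and hence `e`, complemented by its
De Morgan negation, so `a ⇁ x = ∼e ∨ x` is the residual of `e`: `c ≤ a ⇁ x` iff `c ∧ e ≤ x`. It
follows that the cyclic deductive systems are exactly the c-filters. If `D` is a c-filter then so is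
`{x | ∼e ∨ x ∈ D}`, because `e ≤ t(e)` and `△(∼e ∨ x) ≤ ∼e ∨ △x`; this gives (ii). As `{1}` is a
c-filter, the case `H = ∅` is (iii), and complementation turns `∼e ∨ x = 1` into `e ≤ x`, which
is (i).
-/

namespace MpM

/-- De Morgan negation as an isomorphism onto the order dual, through which the library's facts on
order isomorphisms yield the De Morgan laws. -/
def dmOrderIso : A ≃o Aᵒᵈ where
  toFun x := OrderDual.toDual (dm x)
  invFun x := dm (OrderDual.ofDual x)
  left_inv := dm_dm
  right_inv := dm_dm (A := A)
  map_rel_iff' {x y} := by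
    change dm y ≤ dm x ↔ x ≤ y
    rw [← inf_eq_right, ← dm_sup, (Function.LeftInverse.injective dm_dm).eq_iff, sup_eq_right]

theorem dm_antitone : Antitone (dm : A → A) := fun _ _ h => dmOrderIso.monotone h

theorem dm_inf (x y : A) : dm (x ⊓ y) = dm x ⊔ dm y :=
  congrArg OrderDual.ofDual (map_inf dmOrderIso x y)

theorem dm_top : dm (⊤ : A) = ⊥ := congrArg OrderDual.ofDual (map_top dmOrderIso)

theorem dm_bot : dm (⊥ : A) = ⊤ := congrArg OrderDual.ofDual (map_bot dmOrderIso)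

theorem dm_finset_inf {ι : Type*} (s : Finset ι) (f : ι → A) :
    dm (s.inf f) = s.sup fun i => dm (f i) :=
  congrArg OrderDual.ofDual (map_finset_inf dmOrderIso s f)

theorem isCompl_dm_of_inf_dm_eq_bot {x : A} (h : x ⊓ dm x = ⊥) : IsCompl x (dm x) := by
  refine IsCompl.of_eq h ?_
  rw [sup_comm, ← dm_bot, ← h, dm_inf, dm_dm]

theorem isCompl_dm_inf {x y : A} (hx : IsCompl x (dm x)) (hy : IsCompl y (dm y)) :
    IsCompl (x ⊓ y) (dm (x ⊓ y)) := by
  rw [dm_inf]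
  exact hx.inf_sup hy

theorem isCompl_dm_finset_inf {ι : Type*} (s : Finset ι) (f : ι → A)
    (h : ∀ i ∈ s, IsCompl (f i) (dm (f i))) : IsCompl (s.inf f) (dm (s.inf f)) := by
  refine Finset.inf_induction (p := fun x => IsCompl x (dm x)) ?_
    (fun _ hx _ hy => isCompl_dm_inf hx hy) h
  rw [dm_top]
  exact isCompl_top_bot

theorem inf_ps_self (x : A) : x ⊓ ps x = ⊥ := (pseudo x _).mpr le_rfl

theorem inf_dm_ps_dm_le (x : A) : x ⊓ dm (ps (dm x)) ≤ dm x := by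
  have h : dm (dm x ⊔ ps (dm x)) ≤ dm (dm x ⊔ dm (dm x)) := dm_antitone (modal (dm x))
  rw [dm_sup, dm_sup, dm_dm] at h
  exact h.trans inf_le_right

end MpM

section Tri

theorem tri_eq (x : A) : tri x = x ⊓ ps (dm x) := by
  rw [tri, nabla, dm_dm, dm_dm]

theorem nabla_dm (x : A) : nabla (dm x) = dm (tri x) := (dm_dm _).symm

theorem tri_le (x : A) : tri x ≤ x := by
  rw [tri_eq]
  exact inf_le_left

theorem tri_top : tri (⊤ : A) = ⊤ := by
  rw [tri_eq, top_inf_eq, dm_top, ← top_le_iff, ← pseudo, bot_inf_eq]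

theorem isCompl_tri_dm (x : A) : IsCompl (tri x) (dm (tri x)) := by
  apply isCompl_dm_of_inf_dm_eq_bot
  have key : x ⊓ dm (tri x) ≤ dm x := by
    rw [tri_eq, dm_inf, inf_sup_left]
    exact sup_le inf_le_right (inf_dm_ps_dm_le x)
  rw [← le_bot_iff]
  calc tri x ⊓ dm (tri x) = x ⊓ dm (tri x) ⊓ ps (dm x) := by
        nth_rw 1 [tri_eq]
        rw [inf_right_comm]
    _ ≤ dm x ⊓ ps (dm x) := inf_le_inf_right _ key
    _ = ⊥ := inf_ps_self _

theorem tri_dm_sup_le {e : A} (he : IsCompl e (dm e)) (x : A) :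
    tri (dm e ⊔ x) ≤ dm e ⊔ tri x := by
  rw [sup_comm (dm e) (tri x), he.le_sup_right_iff_inf_left_le, tri_eq, tri_eq, dm_sup, dm_dm]
  refine le_inf ?_ ((pseudo _ _).mp ?_)
  · rw [← he.le_sup_right_iff_inf_left_le, sup_comm x]
    exact inf_le_left
  · rw [← le_bot_iff, ← inf_ps_self (e ⊓ dm x)]
    exact le_inf (le_inf (inf_le_right.trans inf_le_right) inf_le_left)
      (inf_le_right.trans (inf_le_left.trans inf_le_right))

end Tri

namespace CkStr

variable {k : ℕ} (T : CkStr A k)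

theorem monotone : Monotone T.t :=
  OrderHomClass.mono (⟨T.t, T.map_inf⟩ : InfHom A A)

theorem commute_tri : Function.Commute T.t tri := fun x => by
  simp only [tri_eq, T.map_inf, T.map_ps, T.map_dm]

/-- The meet `⋀_{j=1}^{k} t^j(△x)` of the cyclic translates of `△x`, which for `0 < k` is the
least element of the cyclic deductive system generated by `x`. -/
def cyclicTri (x : A) : A := (Finset.Icc 1 k).inf fun j => T.t^[j] (tri x)

theorem isCompl_cyclicTri_dm (x : A) : IsCompl (T.cyclicTri x) (dm (T.cyclicTri x)) := by
  refine isCompl_dm_finset_inf _ _ fun j _ => ?_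
  rw [T.commute_tri.iterate_left j x]
  exact isCompl_tri_dm _

theorem cyclicTri_le_iterate (hk : 0 < k) (n : ℕ) (x : A) :
    T.cyclicTri x ≤ T.t^[n] (tri x) := by
  have hper : Function.IsPeriodicPt T.t k (tri x) := T.periodic _
  have hle {j : ℕ} (hj : j ∈ Finset.Icc 1 k) : T.cyclicTri x ≤ T.t^[j] (tri x) := Finset.inf_le hj
  rw [← hper.iterate_mod_apply n]
  rcases (n % k).eq_zero_or_pos with hzero | hpos
  · rw [hzero, Function.iterate_zero_apply, ← T.periodic (tri x)]
    exact hle (Finset.right_mem_Icc.mpr hk)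
  · exact hle (Finset.mem_Icc.mpr ⟨hpos, (Nat.mod_lt n hk).le⟩)

theorem cyclicTri_le_tri (hk : 0 < k) (x : A) : T.cyclicTri x ≤ tri x :=
  T.cyclicTri_le_iterate hk 0 x

theorem cyclicTri_le (hk : 0 < k) (x : A) : T.cyclicTri x ≤ x :=
  (T.cyclicTri_le_tri hk x).trans (tri_le x)

theorem cyclicTri_le_map (hk : 0 < k) (x : A) : T.cyclicTri x ≤ T.t x :=
  (T.cyclicTri_le_iterate hk 1 x).trans (T.monotone (tri_le x))

theorem cyclicTri_le_map_cyclicTri (hk : 0 < k) (x : A) :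
    T.cyclicTri x ≤ T.t (T.cyclicTri x) := by
  have hmap : T.t (T.cyclicTri x) = (Finset.Icc 1 k).inf fun j => T.t^[j + 1] (tri x) := by
    simp only [Function.iterate_succ_apply']
    exact Finset.apply_inf_eq_inf_comp T.t T.map_inf T.map_top
  rw [hmap]
  exact Finset.le_inf fun j _ => T.cyclicTri_le_iterate hk (j + 1) x

end CkStr

section Rimp

variable {k : ℕ} (T : CkStr A k)

theorem rimp_eq (a b : A) : rimp T a b = dm (T.cyclicTri a) ⊔ b := by
  simp only [rimp, CkStr.cyclicTri, dm_finset_inf, nabla_dm, T.commute_tri.iterate_left _ a]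

theorem le_rimp_iff {a b c : A} : c ≤ rimp T a b ↔ c ⊓ T.cyclicTri a ≤ b := by
  rw [rimp_eq, sup_comm, (T.isCompl_cyclicTri_dm a).le_sup_right_iff_inf_left_le]

theorem rimp_eq_top_iff {a b : A} : rimp T a b = ⊤ ↔ T.cyclicTri a ≤ b := by
  rw [← top_le_iff, le_rimp_iff, top_inf_eq]

theorem le_rimp (a b : A) : b ≤ rimp T a b := (le_rimp_iff T).mpr inf_le_left

theorem rimp_mono_right (a : A) : Monotone (rimp T a) := fun _ _ h => sup_le_sup_left h _

theorem rimp_inf (a b c : A) : rimp T a (b ⊓ c) = rimp T a b ⊓ rimp T a c := sup_inf_left _ _ _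

theorem tri_rimp_le (a b : A) : tri (rimp T a b) ≤ rimp T a (tri b) := by
  rw [rimp_eq, rimp_eq]
  exact tri_dm_sup_le (T.isCompl_cyclicTri_dm a) b

theorem map_rimp_le (hk : 0 < k) (a b : A) : T.t (rimp T a b) ≤ rimp T a (T.t b) := by
  rw [rimp_eq, rimp_eq, T.map_sup, T.map_dm]
  exact sup_le_sup_right (dm_antitone (T.cyclicTri_le_map_cyclicTri hk a)) _

end Rimp

section DeductiveSystem

variable {k : ℕ} {T : CkStr A k} {D : Set A}

theorem IsLatFilter.top_mem {F : Set A} (hF : IsLatFilter F) : ⊤ ∈ F :=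
  let ⟨⟨x, hx⟩, mem_of_le, _⟩ := hF
  mem_of_le x hx ⊤ le_top

theorem IsCFilter.cyclicTri_mem (hD : IsCFilter T D) {x : A} (hx : x ∈ D) :
    T.cyclicTri x ∈ D := by
  have hmaps : Set.MapsTo T.t D D := fun y hy => (hD.2 y hy).2
  exact Finset.inf_mem D hD.1.top_mem hD.1.2.2 _ _ fun j _ => hmaps.iterate j (hD.2 x hx).1

theorem IsCFilter.isCDS (hD : IsCFilter T D) : IsCDS T D := by
  refine ⟨hD.1.top_mem, fun x hx y hxy => ?_⟩
  have ⟨⟨_, mem_of_le, inf_mem⟩, _⟩ := hD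
  exact mem_of_le _ (inf_mem _ hxy _ (hD.cyclicTri_mem hx)) y ((le_rimp_iff T).mp le_rfl)

theorem IsCDS.mem_of_cyclicTri_le (hD : IsCDS T D) {x y : A} (hx : x ∈ D)
    (h : T.cyclicTri x ≤ y) : y ∈ D :=
  hD.2 x hx y ((rimp_eq_top_iff T).mpr h ▸ hD.1)

theorem IsCDS.mem_of_le (hk : 0 < k) (hD : IsCDS T D) {x y : A} (hx : x ∈ D) (h : x ≤ y) : y ∈ D :=
  hD.mem_of_cyclicTri_le hx ((T.cyclicTri_le hk x).trans h)

theorem IsCDS.inf_mem (hk : 0 < k) (hD : IsCDS T D) {x y : A} (hx : x ∈ D) (hy : y ∈ D) :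
    x ⊓ y ∈ D := by
  refine hD.2 x hx _ (hD.mem_of_le hk hy ?_)
  rw [le_rimp_iff, inf_comm]
  exact inf_le_inf_right y (T.cyclicTri_le hk x)

theorem isCDS_iff_isCFilter (hk : 0 < k) : IsCDS T D ↔ IsCFilter T D where
  mp hD :=
    ⟨⟨⟨⊤, hD.1⟩, fun _ hx _ => hD.mem_of_le hk hx, fun _ hx _ => hD.inf_mem hk hx⟩,
      fun x hx => ⟨hD.mem_of_cyclicTri_le hx (T.cyclicTri_le_tri hk x),
        hD.mem_of_cyclicTri_le hx (T.cyclicTri_le_map hk x)⟩⟩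
  mpr := IsCFilter.isCDS

theorem IsCFilter.preimage_rimp (hk : 0 < k) (hD : IsCFilter T D) (a : A) :
    IsCFilter T (rimp T a ⁻¹' D) := by
  have ⟨⟨_, mem_of_le, inf_mem⟩, tri_map_mem⟩ := hD
  refine ⟨⟨⟨⊤, mem_of_le _ hD.1.top_mem _ (le_rimp T a ⊤)⟩, fun x hx y hxy => ?_,
    fun x hx y hy => ?_⟩, fun x hx => ⟨?_, ?_⟩⟩
  · exact mem_of_le _ hx _ (rimp_mono_right T a hxy)
  · rw [Set.mem_preimage, rimp_inf]
    exact inf_mem _ hx _ hy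
  · exact mem_of_le _ (tri_map_mem _ hx).1 _ (tri_rimp_le T a x)
  · exact mem_of_le _ (tri_map_mem _ hx).2 _ (map_rimp_le T hk a x)

theorem isCFilter_singleton_top : IsCFilter T {⊤} := by
  refine ⟨⟨Set.singleton_nonempty ⊤, ?_, ?_⟩, ?_⟩
  · rintro _ rfl y hy
    exact top_le_iff.mp hy
  · rintro _ rfl _ rfl
    exact inf_top_eq ⊤
  · rintro _ rfl
    exact ⟨tri_top, T.map_top⟩

end DeductiveSystem

section Generated

variable {k : ℕ} (T : CkStr A k)

theorem isCDS_genCDS (X : Set A) : IsCDS T (genCDS T X) :=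
  ⟨fun _ hD => hD.1.1, fun x hx y hxy D hD => hD.1.2 x (hx D hD) y (hxy D hD)⟩

theorem subset_genCDS (X : Set A) : X ⊆ genCDS T X := fun _ hx _ hD => hD.2 hx

variable {T} in
theorem genCDS_subset {X D : Set A} (hD : IsCDS T D) (hX : X ⊆ D) : genCDS T X ⊆ D :=
  Set.sInter_subset_of_mem ⟨hD, hX⟩

theorem genCDS_mono : Monotone (genCDS T) := fun _ Y h =>
  genCDS_subset (isCDS_genCDS T Y) (h.trans (subset_genCDS T Y))

theorem genCDS_empty : genCDS T ∅ = {⊤} :=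
  (genCDS_subset isCFilter_singleton_top.isCDS (Set.empty_subset _)).antisymm
    (Set.singleton_subset_iff.mpr (isCDS_genCDS T ∅).1)

theorem genCDS_union_singleton (hk : 0 < k) (a : A) (H : Set A) :
    genCDS T (H ∪ {a}) = {x : A | rimp T a x ∈ genCDS T H} := by
  have hH : IsCDS T (genCDS T H) := isCDS_genCDS T H
  apply Set.Subset.antisymm
  · refine genCDS_subset (((isCDS_iff_isCFilter hk).mp hH).preimage_rimp hk a).isCDS ?_
    refine Set.union_subset (fun x hx => ?_) (Set.singleton_subset_iff.mpr ?_)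
    · exact hH.mem_of_le hk (subset_genCDS T H hx) (le_rimp T a x)
    · change rimp T a a ∈ genCDS T H
      rw [(rimp_eq_top_iff T).mpr (T.cyclicTri_le hk a)]
      exact hH.1
  · intro x hx
    exact (isCDS_genCDS T _).2 a (subset_genCDS T _ (Or.inr rfl)) x
      (genCDS_mono T Set.subset_union_left hx)

theorem genCDS_singleton (hk : 0 < k) (a : A) : genCDS T {a} = {x : A | rimp T a x = ⊤} := by
  simpa only [Set.empty_union, genCDS_empty, Set.mem_singleton_iff] using
    genCDS_union_singleton T hk a ∅

end Generated

theorem stmt10 {k : ℕ} (hk : 0 < k) (T : CkStr A k) (a : A) (H : Set A) :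
    genCDS T {a} = {x : A | ((Finset.Icc 1 k).inf fun j => T.t^[j] (tri a)) ≤ x} ∧
    genCDS T (H ∪ {a}) = {x : A | rimp T a x ∈ genCDS T H} ∧
    genCDS T {a} = {x : A | rimp T a x = ⊤} := by
  refine ⟨?_, genCDS_union_singleton T hk a H, genCDS_singleton T hk a⟩
  rw [genCDS_singleton T hk a]
  exact Set.ext fun x => rimp_eq_top_iff T
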